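/- Let p ∈ [0,1]^S, let P = P_p, and let (i,a) ∈ S. Let B be either the event Π_{i,a} or its complement, and assume Pr_P[B] > 0. Then, conditioned on B, the random variable F(X,p)_{i,a} (for X ∼ P) is independent of the tuple (F(X,p)_{j,a'}) indexed by (j,a') ∈ S with j ≤ i and (j,a') ≠ (i,a); that is, for every b ∈ ℝ and every tuple of reals w = (w_{j,a'}), Pr_{X∼P}[F(X,p)_{i,a} = b and F(X,p)_{j,a'} = w_{j,a'} for all such (j,a') | B] = Pr_{X∼P}[F(X,p)_{i,a} = b | B] · Pr_{X∼P}[F(X,p)_{j,a'} = w_{j,a'} for all such (j,a') | B]. -/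

import Mathlib

open scoped BigOperators Classical

/-- The index set `S` of parental configurations: pairs `(i, a)` where
`a : Parents i → Bool`. -/
abbrev BNIdx (d : ℕ) (Par : Fin d → Finset (Fin d)) :=
  (i : Fin d) × ({j : Fin d // j ∈ Par i} → Bool)

/-- The restriction of `x ∈ {0,1}^d` to the parents of node `i`. -/
def cfgOf {d : ℕ} (Par : Fin d → Finset (Fin d)) (x : Fin d → Bool) (i : Fin d) :
    {j : Fin d // j ∈ Par i} → Bool :=
  fun j => x j.1

/-- The Bayesian network `P_p` with conditional probability table `p`. -/
noncomputable def bnDist {d : ℕ} (Par : Fin d → Finset (Fin d))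
    (p : BNIdx d Par → ℝ) (x : Fin d → Bool) : ℝ :=
  ∏ i : Fin d, if x i then p ⟨i, cfgOf Par x i⟩ else 1 - p ⟨i, cfgOf Par x i⟩

/-- `Pr_R[Π_k]`, the probability of the parental configuration `k` under `R`. -/
noncomputable def prCfg {d : ℕ} (Par : Fin d → Finset (Fin d))
    (R : (Fin d → Bool) → ℝ) (k : BNIdx d Par) : ℝ :=
  ∑ x : Fin d → Bool, if cfgOf Par x k.1 = k.2 then R x else 0

/-- Probability of an event `A` under `R`. -/
noncomputable def prEvent {d : ℕ} (R : (Fin d → Bool) → ℝ)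
    (A : (Fin d → Bool) → Prop) : ℝ :=
  ∑ x : Fin d → Bool, if A x then R x else 0

/-- Expectation `E_{X ∼ R}[g(X)]`. -/
noncomputable def expec {d : ℕ} (R : (Fin d → Bool) → ℝ)
    (g : (Fin d → Bool) → ℝ) : ℝ :=
  ∑ x : Fin d → Bool, R x * g x

/-- The vector `F(x, q) ∈ ℝ^S`. -/
noncomputable def Fvec {d : ℕ} (Par : Fin d → Finset (Fin d))
    (x : Fin d → Bool) (q : BNIdx d Par → ℝ) (k : BNIdx d Par) : ℝ :=
  if cfgOf Par x k.1 = k.2 then (if x k.1 then 1 else 0) else q k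

/-- `R` is a probability distribution on the finite set `D`. -/
def IsProbDist {D : Type*} [Fintype D] (R : D → ℝ) : Prop :=
  (∀ x, 0 ≤ R x) ∧ ∑ x, R x = 1

/-- Total variation distance. -/
noncomputable def dTV {D : Type*} [Fintype D] (A B : D → ℝ) : ℝ :=
  (∑ x, |A x - B x|) / 2

/-- Squared Hellinger distance `d_H(A,B)² = 1 - Σ √(A(x)·B(x))`. -/
noncomputable def hellingerSq {D : Type*} [Fintype D] (A B : D → ℝ) : ℝ :=
  1 - ∑ x, Real.sqrt (A x * B x)

/-- Euclidean norm on `ℝ^ι`. -/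
noncomputable def enorm2 {ι : Type*} [Fintype ι] (v : ι → ℝ) : ℝ :=
  Real.sqrt (∑ k, v k ^ 2)

/-- The second-moment matrix `M_R` (relative to `q`). -/
noncomputable def covM {d : ℕ} (Par : Fin d → Finset (Fin d))
    (R : (Fin d → Bool) → ℝ) (q : BNIdx d Par → ℝ) :
    Matrix (BNIdx d Par) (BNIdx d Par) ℝ :=
  fun k l => expec R (fun x => (Fvec Par x q k - q k) * (Fvec Par x q l - q l))

/-- `M_R^0`: the matrix `M_R` with zeroed diagonal. -/
noncomputable def covM0 {d : ℕ} (Par : Fin d → Finset (Fin d))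
    (R : (Fin d → Bool) → ℝ) (q : BNIdx d Par → ℝ) :
    Matrix (BNIdx d Par) (BNIdx d Par) ℝ :=
  fun k l => if k = l then 0 else covM Par R q k l

/-- Spectral norm (ℓ²-operator norm) of a real matrix. -/
noncomputable def specNorm {ι : Type*} [Fintype ι] [DecidableEq ι]
    (M : Matrix ι ι ℝ) : ℝ :=
  ‖Matrix.toEuclideanCLM (𝕜 := ℝ) M‖

/-! The vector `F(X, p)` is centred given the past: `E[g(X) (F(X, p)_k - p_k)] = 0` for every `k` at
node `i` and every `g` that reads only the coordinates before `i`. To see this, sum out the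
coordinates after `i` from the last one down, each of whose conditional factors sums to `1`; what
is left vanishes after summing over `x_i`, because a Bernoulli variable minus its mean is centred.

On `Π_k` the entries of `F` at nodes up to `i` other than `F_k` read only coordinates before `i`,
whereas `F_k = X_i` is `0` or `1`. So an event `A ⊆ Π_k` about the past satisfies
`Pr[A, F_k = b] = c · Pr[A]` with a constant `c` not depending on `A`. Off `Π_k` the entry `F_k` is
constant, and the same formula holds for every `A`. -/

lemma prod_eq_prod_Iio_mul_mul_prod_Ioi {ι M : Type*} [Fintype ι] [LinearOrder ι]
    [LocallyFiniteOrderBot ι] [LocallyFiniteOrderTop ι] [CommMonoid M] (i : ι) (f : ι → M) :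
    ∏ j, f j = (∏ j ∈ Finset.Iio i, f j) * f i * ∏ j ∈ Finset.Ioi i, f j := by
  have hIoi : (Finset.Iic i)ᶜ = Finset.Ioi i := by
    ext
    simp
  rw [Finset.prod_Iio_mul_eq_prod_Iic, ← hIoi, Finset.prod_mul_prod_compl]

section DependsOn

variable {ι α κ R : Type*} {s : Set ι}

lemma dependsOn_mul [Mul R] {g h : (ι → α) → R} (hg : DependsOn g s) (hh : DependsOn h s) :
    DependsOn (fun x => g x * h x) s :=
  fun _ _ hxy => congrArg₂ (· * ·) (hg hxy) (hh hxy)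

lemma dependsOn_prod [CommMonoid R] {t : Finset κ} {f : κ → (ι → α) → R}
    (hf : ∀ j ∈ t, DependsOn (f j) s) :
    DependsOn (fun x => ∏ j ∈ t, f j x) s :=
  fun _ _ hxy => Finset.prod_congr rfl fun j hj => hf j hj hxy

end DependsOn

section Summation

variable {ι α : Type*} [Fintype ι] [Fintype α]

lemma sum_sum_update [DecidableEq ι] {M : Type*} [AddCommMonoid M] (i : ι) (f : (ι → α) → M) :
    ∑ x : ι → α, ∑ a, f (Function.update x i a) = Fintype.card α • ∑ x, f x := by
  have hswap : Function.Involutive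
      fun q : (ι → α) × α => (Function.update q.1 i q.2, q.1 i) := by
    rintro ⟨x, a⟩
    simp
  calc ∑ x : ι → α, ∑ a, f (Function.update x i a)
      = ∑ q : (ι → α) × α, f (Function.update q.1 i q.2) :=
        (Fintype.sum_prod_type fun q : (ι → α) × α => f (Function.update q.1 i q.2)).symm
    _ = ∑ q : (ι → α) × α, f q.1 :=
        Equiv.sum_comp hswap.toPerm fun q : (ι → α) × α => f q.1
    _ = Fintype.card α • ∑ x, f x := by
        simp only [Fintype.sum_prod_type, Finset.sum_const, Finset.card_univ, Finset.smul_sum]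

lemma card_mul_sum_mul_of_dependsOn_compl [DecidableEq ι] {R : Type*} [Semiring R]
    {i : ι} {h : (ι → α) → R} (hh : DependsOn h {i}ᶜ) (f : (ι → α) → R) :
    Fintype.card α * ∑ x, h x * f x = ∑ x, h x * ∑ a, f (Function.update x i a) := by
  have hupdate (x : ι → α) (a : α) : h (Function.update x i a) = h x :=
    hh fun _ hj => Function.update_of_ne hj _ _
  rw [← nsmul_eq_mul, ← sum_sum_update i]
  simp only [hupdate, Finset.mul_sum]

lemma card_pow_mul_sum_mul_prod_of_dependsOn_compl [LinearOrder ι] {R : Type*} [CommSemiring R]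
    {f : ι → (ι → α) → R} (hf : ∀ i, DependsOn (f i) (Set.Iic i))
    (hf_sum : ∀ i x, ∑ a, f i (Function.update x i a) = 1)
    (s : Finset ι) {h : (ι → α) → R} (hh : DependsOn h (sᶜ : Set ι)) :
    (Fintype.card α : R) ^ s.card * ∑ x, h x * ∏ i ∈ s, f i x = ∑ x, h x := by
  induction s using Finset.induction_on_min generalizing h with
  | empty => simp
  | insert i s hlt ih =>
    have hi : i ∉ s := fun his => (hlt i his).false
    have hh_i : DependsOn h {i}ᶜ := hh.mono (by simp)
    have hhf : DependsOn (fun x => h x * f i x) (sᶜ : Set ι) :=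
      dependsOn_mul (hh.mono (by simp)) ((hf i).mono fun j hj hjs => (hlt j hjs).not_ge hj)
    calc (Fintype.card α : R) ^ (insert i s).card * ∑ x, h x * ∏ j ∈ insert i s, f j x
        = Fintype.card α * (Fintype.card α ^ s.card * ∑ x, h x * f i x * ∏ j ∈ s, f j x) := by
          simp only [Finset.card_insert_of_notMem hi, Finset.prod_insert hi, pow_succ', mul_assoc]
      _ = Fintype.card α * ∑ x, h x * f i x := by rw [ih hhf]
      _ = ∑ x, h x := by simp only [card_mul_sum_mul_of_dependsOn_compl hh_i, hf_sum, mul_one]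

lemma sum_mul_mul_prod_eq_zero_of_sum_update_eq_zero [LinearOrder ι]
    [LocallyFiniteOrderBot ι] [LocallyFiniteOrderTop ι] [Nonempty α]
    {R : Type*} [CommSemiring R] [NoZeroDivisors R] [CharZero R]
    {f : ι → (ι → α) → R} (hf : ∀ i, DependsOn (f i) (Set.Iic i))
    (hf_sum : ∀ i x, ∑ a, f i (Function.update x i a) = 1)
    {i : ι} {g u : (ι → α) → R} (hg : DependsOn g (Set.Iio i)) (hu : DependsOn u (Set.Iic i))
    (hu_sum : ∀ x, ∑ a, u (Function.update x i a) * f i (Function.update x i a) = 0) :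
    ∑ x, g x * u x * ∏ j, f j x = 0 := by
  let past x := g x * ∏ j ∈ Finset.Iio i, f j x
  let present x := u x * f i x
  have hpast : DependsOn past (Set.Iio i) :=
    dependsOn_mul hg <| dependsOn_prod fun j hj =>
      (hf j).mono (Set.Iic_subset_Iio.2 (Finset.mem_Iio.1 hj))
  have hpast_present : DependsOn (fun x => past x * present x) (Set.Iic i) :=
    dependsOn_mul (hpast.mono Set.Iio_subset_Iic_self) (dependsOn_mul hu (hf i))
  have hcard : (Fintype.card α : R) ≠ 0 := Nat.cast_ne_zero.2 Fintype.card_ne_zero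
  have hsum_past_present : ∑ x, past x * present x = 0 := by
    refine (mul_eq_zero_iff_left hcard).1 ?_
    rw [card_mul_sum_mul_of_dependsOn_compl (i := i) (hpast.mono (by simp))]
    simp only [present, hu_sum, mul_zero, Finset.sum_const_zero]
  refine (mul_eq_zero_iff_left (pow_ne_zero (Finset.Ioi i).card hcard)).1 ?_
  calc (Fintype.card α : R) ^ (Finset.Ioi i).card * ∑ x, g x * u x * ∏ j, f j x
      = Fintype.card α ^ (Finset.Ioi i).card *
          ∑ x, past x * present x * ∏ j ∈ Finset.Ioi i, f j x := by
        simp only [prod_eq_prod_Iio_mul_mul_prod_Ioi i, past, present]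
        congr! 2
        ring
    _ = ∑ x, past x * present x :=
        card_pow_mul_sum_mul_prod_of_dependsOn_compl hf hf_sum _ (hpast_present.mono (by simp))
    _ = 0 := hsum_past_present

end Summation

section Event

variable {d : ℕ} (R : (Fin d → Bool) → ℝ)

lemma prEvent_eq_expec (A : (Fin d → Bool) → Prop) :
    prEvent R A = expec R fun x => if A x then 1 else 0 := by
  simp only [prEvent, expec, mul_ite, mul_one, mul_zero]

lemma prEvent_and_eq_expec (A C : (Fin d → Bool) → Prop) :
    prEvent R (fun x => A x ∧ C x) =
      expec R fun x => (if A x then 1 else 0) * if C x then 1 else 0 := by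
  simp only [prEvent_eq_expec, ite_zero_mul_ite_zero, one_mul]
  congr!

lemma prEvent_and_eq_const_of_imp {A : (Fin d → Bool) → Prop} {β : Type*}
    {Y : (Fin d → Bool) → β} {y : β} (hY : ∀ x, A x → Y x = y) (b : β) :
    prEvent R (fun x => A x ∧ Y x = b) = (if y = b then 1 else 0) * prEvent R A := by
  simp only [prEvent, Finset.mul_sum]
  refine Finset.sum_congr rfl fun x _ => ?_
  by_cases hx : A x <;> simp [hx, hY]

end Event

section BayesianNetwork

variable {d : ℕ} {Par : Fin d → Finset (Fin d)}

/-- The conditional probability of the value `x i` given the values of `x` at the parents of `i`: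
the `i`-th factor of `bnDist Par p x`. -/
noncomputable def condFactor (Par : Fin d → Finset (Fin d)) (p : BNIdx d Par → ℝ) (i : Fin d)
    (x : Fin d → Bool) : ℝ :=
  if x i then p ⟨i, cfgOf Par x i⟩ else 1 - p ⟨i, cfgOf Par x i⟩

lemma Fvec_of_cfgOf_eq {x : Fin d → Bool} {k : BNIdx d Par} (hx : cfgOf Par x k.1 = k.2)
    (q : BNIdx d Par → ℝ) : Fvec Par x q k = if x k.1 then 1 else 0 :=
  if_pos hx

lemma Fvec_of_cfgOf_ne {x : Fin d → Bool} {k : BNIdx d Par} (hx : cfgOf Par x k.1 ≠ k.2)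
    (q : BNIdx d Par → ℝ) : Fvec Par x q k = q k :=
  if_neg hx

lemma cfgOf_ne_of_fst_eq {x : Fin d → Bool} {k k₀ : BNIdx d Par} (hfst : k.1 = k₀.1)
    (hne : k ≠ k₀) (hx : cfgOf Par x k₀.1 = k₀.2) : cfgOf Par x k.1 ≠ k.2 := by
  obtain ⟨i, a⟩ := k
  obtain ⟨_, a₀⟩ := k₀
  obtain rfl : i = _ := hfst
  exact fun ha => hne (congrArg (Sigma.mk i) (ha.symm.trans hx))

variable (hpar : ∀ i, ∀ j ∈ Par i, j < i)
include hpar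

lemma dependsOn_cfgOf (i : Fin d) : DependsOn (fun x => cfgOf Par x i) (Set.Iio i) :=
  fun _ _ hxy => funext fun j => hxy j (hpar i j j.2)

lemma cfgOf_update_self (x : Fin d → Bool) (i : Fin d) (a : Bool) :
    cfgOf Par (Function.update x i a) i = cfgOf Par x i :=
  dependsOn_cfgOf hpar i fun _ hj => Function.update_of_ne hj.ne _ _

lemma dependsOn_condFactor (p : BNIdx d Par → ℝ) (i : Fin d) :
    DependsOn (condFactor Par p i) (Set.Iic i) := fun x y hxy => by
  have hcfg : cfgOf Par x i = cfgOf Par y i :=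
    (dependsOn_cfgOf hpar i).mono Set.Iio_subset_Iic_self hxy
  rw [condFactor, condFactor, hcfg, hxy i Set.self_mem_Iic]

lemma dependsOn_Fvec (q : BNIdx d Par → ℝ) (k : BNIdx d Par) :
    DependsOn (fun x => Fvec Par x q k) (Set.Iic k.1) := fun x y hxy => by
  have hcfg : cfgOf Par x k.1 = cfgOf Par y k.1 :=
    (dependsOn_cfgOf hpar k.1).mono Set.Iio_subset_Iic_self hxy
  simp only [Fvec, hcfg, hxy k.1 Set.self_mem_Iic]

lemma sum_condFactor_update (p : BNIdx d Par → ℝ) (i : Fin d) (x : Fin d → Bool) :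
    ∑ a, condFactor Par p i (Function.update x i a) = 1 := by
  simp [condFactor, cfgOf_update_self hpar]

lemma sum_Fvec_sub_mul_condFactor_update (p : BNIdx d Par → ℝ) (k : BNIdx d Par)
    (x : Fin d → Bool) :
    ∑ a, (Fvec Par (Function.update x k.1 a) p k - p k) *
      condFactor Par p k.1 (Function.update x k.1 a) = 0 := by
  by_cases hx : cfgOf Par x k.1 = k.2
  · simp only [Fvec, condFactor, cfgOf_update_self hpar, hx, Function.update_self,
      Fintype.sum_bool, if_true, Bool.false_eq_true, if_false]
    ring
  · simp [Fvec, cfgOf_update_self hpar, hx]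

theorem expec_mul_Fvec_sub_eq_zero (p : BNIdx d Par → ℝ) (k : BNIdx d Par)
    {g : (Fin d → Bool) → ℝ} (hg : DependsOn g (Set.Iio k.1)) :
    expec (bnDist Par p) (fun x => g x * (Fvec Par x p k - p k)) = 0 := by
  have hFvec : DependsOn (fun x => Fvec Par x p k - p k) (Set.Iic k.1) :=
    fun _ _ hxy => congrArg (· - p k) (dependsOn_Fvec hpar p k hxy)
  simp only [expec, mul_comm (bnDist Par p _)]
  exact sum_mul_mul_prod_eq_zero_of_sum_update_eq_zero (dependsOn_condFactor hpar p)
    (sum_condFactor_update hpar p) hg hFvec (sum_Fvec_sub_mul_condFactor_update hpar p k)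

theorem expec_mul_comp_Fvec (p : BNIdx d Par → ℝ) (k : BNIdx d Par) {g : (Fin d → Bool) → ℝ}
    (hg : DependsOn g (Set.Iio k.1)) (hcfg : ∀ x, g x ≠ 0 → cfgOf Par x k.1 = k.2) (ψ : ℝ → ℝ) :
    expec (bnDist Par p) (fun x => g x * ψ (Fvec Par x p k)) =
      (p k * ψ 1 + (1 - p k) * ψ 0) * expec (bnDist Par p) g := by
  -- On `Π_k` the entry `F_k` takes only the values `0` and `1`, so `ψ` may be taken to be affine.
  have haffine (x : Fin d → Bool) :
      g x * ψ (Fvec Par x p k) = (p k * ψ 1 + (1 - p k) * ψ 0) * g x +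
        (ψ 1 - ψ 0) * (g x * (Fvec Par x p k - p k)) := by
    by_cases hx : g x = 0
    · simp only [hx, zero_mul, mul_zero, add_zero]
    · rw [Fvec_of_cfgOf_eq (hcfg x hx)]
      split_ifs <;> ring
  calc expec (bnDist Par p) (fun x => g x * ψ (Fvec Par x p k))
      = (p k * ψ 1 + (1 - p k) * ψ 0) * expec (bnDist Par p) g +
          (ψ 1 - ψ 0) * expec (bnDist Par p) (fun x => g x * (Fvec Par x p k - p k)) := by
        simp only [expec, haffine, mul_add, Finset.sum_add_distrib, Finset.mul_sum,
          mul_left_comm (bnDist Par p _)]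
    _ = (p k * ψ 1 + (1 - p k) * ψ 0) * expec (bnDist Par p) g := by
        rw [expec_mul_Fvec_sub_eq_zero hpar p k hg, mul_zero, add_zero]

theorem prEvent_and_Fvec_eq_of_imp_cfgOf_eq (p : BNIdx d Par → ℝ) (k : BNIdx d Par)
    {A : (Fin d → Bool) → Prop} (hA : DependsOn A (Set.Iio k.1))
    (hcfg : ∀ x, A x → cfgOf Par x k.1 = k.2) (b : ℝ) :
    prEvent (bnDist Par p) (fun x => A x ∧ Fvec Par x p k = b) =
      (p k * (if 1 = b then 1 else 0) + (1 - p k) * (if 0 = b then 1 else 0)) *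
        prEvent (bnDist Par p) A := by
  have hind : DependsOn (fun x => if A x then (1 : ℝ) else 0) (Set.Iio k.1) :=
    fun x y hxy => by simp only [hA hxy]
  have hind_cfg (x : Fin d → Bool) (hx : (if A x then (1 : ℝ) else 0) ≠ 0) :
      cfgOf Par x k.1 = k.2 :=
    hcfg x (of_not_not fun hAx => hx (if_neg hAx))
  rw [prEvent_and_eq_expec, prEvent_eq_expec]
  exact expec_mul_comp_Fvec hpar p k hind hind_cfg fun t => if t = b then 1 else 0

lemma Fvec_eq_of_eqOn_Iio (q : BNIdx d Par → ℝ) {k k₀ : BNIdx d Par} (hle : k.1 ≤ k₀.1)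
    (hne : k ≠ k₀) {x y : Fin d → Bool} (hx : cfgOf Par x k₀.1 = k₀.2)
    (hxy : ∀ j ∈ Set.Iio k₀.1, x j = y j) : Fvec Par x q k = Fvec Par y q k := by
  rcases hle.lt_or_eq with hlt | hfst
  · exact (dependsOn_Fvec hpar q k).mono (Set.Iic_subset_Iio.2 hlt) hxy
  · have hy : cfgOf Par y k₀.1 = k₀.2 := (dependsOn_cfgOf hpar k₀.1 hxy).symm.trans hx
    rw [Fvec_of_cfgOf_ne (cfgOf_ne_of_fst_eq hfst hne hx),
      Fvec_of_cfgOf_ne (cfgOf_ne_of_fst_eq hfst hne hy)]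

lemma dependsOn_cfgOf_eq_and_Fvec_eq (q w : BNIdx d Par → ℝ) (k₀ : BNIdx d Par) :
    DependsOn (fun x => cfgOf Par x k₀.1 = k₀.2 ∧
      ∀ k : BNIdx d Par, k.1 ≤ k₀.1 → k ≠ k₀ → Fvec Par x q k = w k) (Set.Iio k₀.1) := by
  refine fun x y hxy => propext ?_
  simp only [← dependsOn_cfgOf hpar k₀.1 hxy]
  exact and_congr_right fun hx => forall₃_congr fun k hle hne => by
    rw [Fvec_eq_of_eqOn_Iio hpar q hle hne hx hxy]

theorem Fvec_conditionally_independent_general (p : BNIdx d Par → ℝ) (k₀ : BNIdx d Par)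
    (B : (Fin d → Bool) → Prop)
    (hB : (∀ x, B x ↔ cfgOf Par x k₀.1 = k₀.2) ∨ (∀ x, B x ↔ cfgOf Par x k₀.1 ≠ k₀.2))
    (b : ℝ) (w : BNIdx d Par → ℝ) :
    prEvent (bnDist Par p)
        (fun x => B x ∧ Fvec Par x p k₀ = b ∧
          ∀ k : BNIdx d Par, k.1 ≤ k₀.1 → k ≠ k₀ → Fvec Par x p k = w k) *
      prEvent (bnDist Par p) B
    = prEvent (bnDist Par p) (fun x => B x ∧ Fvec Par x p k₀ = b) *
      prEvent (bnDist Par p)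
        (fun x => B x ∧
          ∀ k : BNIdx d Par, k.1 ≤ k₀.1 → k ≠ k₀ → Fvec Par x p k = w k) := by
  let W x := ∀ k : BNIdx d Par, k.1 ≤ k₀.1 → k ≠ k₀ → Fvec Par x p k = w k
  obtain ⟨c, hcB, hcW⟩ : ∃ c,
      prEvent (bnDist Par p) (fun x => B x ∧ Fvec Par x p k₀ = b) =
        c * prEvent (bnDist Par p) B ∧
      prEvent (bnDist Par p) (fun x => (B x ∧ W x) ∧ Fvec Par x p k₀ = b) =
        c * prEvent (bnDist Par p) (fun x => B x ∧ W x) := by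
    rcases hB with hB | hB <;> obtain rfl := funext fun x => propext (hB x)
    · have hdep : DependsOn (fun x => cfgOf Par x k₀.1 = k₀.2) (Set.Iio k₀.1) :=
        fun _ _ hxy => congrArg (· = k₀.2) (dependsOn_cfgOf hpar k₀.1 hxy)
      exact ⟨_, prEvent_and_Fvec_eq_of_imp_cfgOf_eq hpar p k₀ hdep (fun _ hx => hx) b,
        prEvent_and_Fvec_eq_of_imp_cfgOf_eq hpar p k₀
          (dependsOn_cfgOf_eq_and_Fvec_eq hpar p w k₀) (fun _ hx => hx.1) b⟩
    · exact ⟨_, prEvent_and_eq_const_of_imp _ (fun _ hx => Fvec_of_cfgOf_ne hx p) b,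
        prEvent_and_eq_const_of_imp _ (fun _ hx => Fvec_of_cfgOf_ne hx.1 p) b⟩
  have hperm : (fun x => B x ∧ Fvec Par x p k₀ = b ∧ W x) =
      fun x => (B x ∧ W x) ∧ Fvec Par x p k₀ = b := by
    ext x
    tauto
  rw [hperm, hcW, hcB]
  ring

end BayesianNetwork

theorem Fvec_conditionally_independent
    (d : ℕ) (hd : 1 ≤ d) (Par : Fin d → Finset (Fin d))
    (hpar : ∀ i : Fin d, ∀ j ∈ Par i, j < i)
    (p : BNIdx d Par → ℝ) (hp : ∀ k, p k ∈ Set.Icc (0:ℝ) 1)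
    (k₀ : BNIdx d Par) (B : (Fin d → Bool) → Prop)
    (hB : (∀ x, B x ↔ cfgOf Par x k₀.1 = k₀.2) ∨ (∀ x, B x ↔ cfgOf Par x k₀.1 ≠ k₀.2))
    (hpos : 0 < prEvent (bnDist Par p) B)
    (b : ℝ) (w : BNIdx d Par → ℝ) :
    prEvent (bnDist Par p)
        (fun x => B x ∧ Fvec Par x p k₀ = b ∧
          ∀ k : BNIdx d Par, k.1 ≤ k₀.1 → k ≠ k₀ → Fvec Par x p k = w k) /
      prEvent (bnDist Par p) B
    = (prEvent (bnDist Par p) (fun x => B x ∧ Fvec Par x p k₀ = b) /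
        prEvent (bnDist Par p) B) *
      (prEvent (bnDist Par p)
          (fun x => B x ∧
            ∀ k : BNIdx d Par, k.1 ≤ k₀.1 → k ≠ k₀ → Fvec Par x p k = w k) /
        prEvent (bnDist Par p) B) := by
  field_simp
  exact Fvec_conditionally_independent_general hpar p k₀ B hB b w
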